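/- For all Subjective Logic opinions T = (b_T,d_T,u_T) and C = (b_C,d_C,u_C), the projected direction α' = (3/π)·α_C·ε_T − β_T satisfies −π/3 ≤ α' ≤ 2π/3. -/

import Mathlib

/-- The direction α_O of an opinion. -/
noncomputable def alphaO (b d u : ℝ) : ℝ :=
  if b = 1 then 0 else Real.arctan (Real.sqrt 3 * u / (2 * d + u))

/-- The angle β_O of an opinion. -/
noncomputable def betaO (b d u : ℝ) : ℝ :=
  if d = 1 then Real.pi / 3 else Real.arctan (Real.sqrt 3 * u / (2 - 2 * d - u))

/-- The angle γ_O = π/3 − β_O. -/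
noncomputable def gammaO (b d u : ℝ) : ℝ := Real.pi / 3 - betaO b d u

/-- The length |OU|. -/
noncomputable def distOU (b d u : ℝ) : ℝ := Real.sqrt ((1/3) * (1 + d - u)^2 + b^2)

/-- The angle δ_O. -/
noncomputable def deltaO (b d u : ℝ) : ℝ :=
  if u = 1 then 0 else Real.arcsin (b / distOU b d u)

/-- The angle ε_O = π − γ_O − δ_O. -/
noncomputable def epsO (b d u : ℝ) : ℝ := Real.pi - gammaO b d u - deltaO b d u

/-- The projected direction α' = (3/π)·α_C·ε_T − β_T. -/
noncomputable def alphaProj (bT dT uT bC dC uC : ℝ) : ℝ :=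
  (3 / Real.pi) * alphaO bC dC uC * epsO bT dT uT - betaO bT dT uT

/-! Write `t = (3/π) α_C`. Since `0 ≤ α_C ≤ π/3`, we have `t ∈ [0, 1]`, and since `ε_T ≥ 0`, the
direction `α' = t ε_T - β_T` lies between its values at `t = 0` and `t = 1`, which are `-β_T` and
`ε_T - β_T = 2π/3 - δ_T`. The bounds follow from `β_T ≤ π/3` and `δ_T ≥ 0`. -/

open Real Set

lemma arctan_sqrt_three_mul_div_mem_Icc {x y : ℝ} (hy : 0 ≤ y) (hyx : y ≤ x) :
    arctan (√3 * y / x) ∈ Icc 0 (π / 3) := by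
  have hx : 0 ≤ x := hy.trans hyx
  refine ⟨arctan_nonneg.2 (by positivity), ?_⟩
  rw [← arctan_sqrt_three]
  exact arctan_mono (div_le_of_le_mul₀ hx (sqrt_nonneg 3) (by gcongr))

section Angles

variable {b d u : ℝ}

lemma alphaO_mem_Icc (hd : 0 ≤ d) (hu : 0 ≤ u) : alphaO b d u ∈ Icc 0 (π / 3) := by
  unfold alphaO
  split_ifs
  · exact left_mem_Icc.2 (by positivity)
  · exact arctan_sqrt_three_mul_div_mem_Icc hu (by linarith)

lemma three_div_pi_mul_alphaO_mem_Icc (hd : 0 ≤ d) (hu : 0 ≤ u) :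
    3 / π * alphaO b d u ∈ Icc 0 1 := by
  obtain ⟨hα_nonneg, hα_le⟩ := alphaO_mem_Icc (b := b) hd hu
  refine ⟨by positivity, ?_⟩
  calc 3 / π * alphaO b d u ≤ 3 / π * (π / 3) := by gcongr
    _ = 1 := by field_simp

lemma betaO_mem_Icc (hu : 0 ≤ u) (hdu : d + u ≤ 1) : betaO b d u ∈ Icc 0 (π / 3) := by
  unfold betaO
  split_ifs
  · exact right_mem_Icc.2 (by positivity)
  · exact arctan_sqrt_three_mul_div_mem_Icc hu (by linarith)

lemma deltaO_nonneg (hb : 0 ≤ b) : 0 ≤ deltaO b d u := by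
  unfold deltaO
  split_ifs
  · exact le_rfl
  · exact arcsin_nonneg.2 (div_nonneg hb (sqrt_nonneg _))

lemma deltaO_le_pi_div_two : deltaO b d u ≤ π / 2 := by
  unfold deltaO
  split_ifs
  · positivity
  · exact arcsin_le_pi_div_two _

lemma epsO_sub_betaO : epsO b d u - betaO b d u = 2 * π / 3 - deltaO b d u := by
  unfold epsO gammaO
  ring

lemma epsO_nonneg (hu : 0 ≤ u) (hdu : d + u ≤ 1) : 0 ≤ epsO b d u := by
  have hβ : 0 ≤ betaO b d u := (betaO_mem_Icc hu hdu).1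
  have hδ : deltaO b d u ≤ π / 2 := deltaO_le_pi_div_two
  linarith [epsO_sub_betaO (b := b) (d := d) (u := u), pi_pos]

end Angles

section ProjectedDirection

variable {bT dT uT bC dC uC : ℝ}

lemma alphaProj_mem_Icc_neg_betaO (huT : 0 ≤ uT) (hT : dT + uT ≤ 1) (hdC : 0 ≤ dC)
    (huC : 0 ≤ uC) :
    alphaProj bT dT uT bC dC uC ∈ Icc (-betaO bT dT uT) (2 * π / 3 - deltaO bT dT uT) := by
  have hε : 0 ≤ epsO bT dT uT := epsO_nonneg huT hT
  obtain ⟨ht_nonneg, ht_le_one⟩ := three_div_pi_mul_alphaO_mem_Icc (b := bC) hdC huC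
  rw [← epsO_sub_betaO]
  unfold alphaProj
  constructor
  · linarith [mul_nonneg ht_nonneg hε]
  · gcongr
    exact mul_le_of_le_one_left hε ht_le_one

theorem stmt10_general (hbT : 0 ≤ bT) (huT : 0 ≤ uT) (hT : dT + uT ≤ 1) (hdC : 0 ≤ dC)
    (huC : 0 ≤ uC) :
    -(π / 3) ≤ alphaProj bT dT uT bC dC uC ∧ alphaProj bT dT uT bC dC uC ≤ 2 * π / 3 := by
  obtain ⟨h_lower, h_upper⟩ := alphaProj_mem_Icc_neg_betaO (bT := bT) (bC := bC) huT hT hdC huC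
  exact ⟨(neg_le_neg (betaO_mem_Icc huT hT).2).trans h_lower,
    h_upper.trans (sub_le_self _ (deltaO_nonneg hbT))⟩

end ProjectedDirection

/-- For all Subjective Logic opinions T and C, the projected direction
α' = (3/π)·α_C·ε_T − β_T satisfies −π/3 ≤ α' ≤ 2π/3. -/
theorem stmt10 (bT dT uT bC dC uC : ℝ)
    (hbT : 0 ≤ bT) (hdT : 0 ≤ dT) (huT : 0 ≤ uT) (hsumT : bT + dT + uT = 1)
    (hbC : 0 ≤ bC) (hdC : 0 ≤ dC) (huC : 0 ≤ uC) (hsumC : bC + dC + uC = 1) :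
    -(Real.pi / 3) ≤ alphaProj bT dT uT bC dC uC ∧
    alphaProj bT dT uT bC dC uC ≤ 2 * Real.pi / 3 :=
  stmt10_general hbT huT (by linarith) hdC huC
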